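/- arXiv:1511.04957 — 3 statements merged into one kernel-verified Lean document; each statement's English description precedes it below -/
import Mathlib

section
/- Let F be a field of characteristic zero, let n ≥ 1, and let R = F[x_1,…,x_n]. The n-ary Nambu bracket {f_1,…,f_n} = det(∂f_j/∂x_i)_{i,j=1}^n satisfies the Filippov–Jacobi identity: for all a_1,…,a_{n-1}, b_1,…,b_n in R, {a_1,…,a_{n-1}, {b_1,…,b_n}} = Σ_{i=1}^n {b_1,…,b_{i-1}, {a_1,…,a_{n-1}, b_i}, b_{i+1},…,b_n}. In particular, R with the Nambu bracket is an n-Lie (Filippov) algebra. -/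
open MvPolynomial

/-- The n-ary Nambu bracket on F[x_1,…,x_n]:
`{f_1,…,f_n} = det(∂f_j/∂x_i)`. -/
noncomputable def nambuBracket (F : Type*) [Field F] (n : ℕ)
    (f : Fin n → MvPolynomial (Fin n) F) : MvPolynomial (Fin n) F :=
  (Matrix.of fun i j => pderiv i (f j)).det

/-!
With all slots but one filled by `a`, the bracket is a derivation `D = ∑ k, c k • ∂_k` of its
remaining slot, where the `c k` are cofactors of the Jacobian matrix of `a`. Letting a vector field
`D` act on one function of a Jacobian determinant at a time and summing gives `D` of the determinant
plus the divergence of `D` times the determinant, the Lie derivative of `db₁ ∧ ⋯ ∧ dbₙ`. So the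
identity amounts to the Piola identity `∑ k, ∂_k (c k) = 0`, which holds because the symmetric
second derivatives `∂_k ∂_l a_j` are paired here with determinants alternating in `k` and `l`.
-/

section Determinant

variable {A ι : Type*} [CommRing A] [Fintype ι] [DecidableEq ι]

theorem adjugate_apply_eq_det_updateCol (M : Matrix ι ι A) (i j : ι) :
    M.adjugate i j = (M.updateCol i (Pi.single j 1)).det := by
  rw [← Matrix.cramer_apply, Matrix.cramer_eq_adjugate_mulVec, Matrix.mulVec_single_one,
    Matrix.col_apply]

theorem det_updateCol_eq_sum_adjugate (M : Matrix ι ι A) (i : ι) (v : ι → A) :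
    (M.updateCol i v).det = ∑ k, M.adjugate i k * v k := by
  rw [← Matrix.cramer_apply, Matrix.cramer_eq_adjugate_mulVec, Matrix.mulVec_apply_eq_sum]

theorem sum_det_updateCol_col (M N : Matrix ι ι A) :
    ∑ i, (M.updateCol i (N.col i)).det = (M.adjugate * N).trace :=
  Finset.sum_congr rfl fun i _ => det_updateCol_eq_sum_adjugate M i (N.col i)

theorem det_updateCol_updateCol_swap (M : Matrix ι ι A) {i j : ι} (hij : i ≠ j) (u v : ι → A) :
    ((M.updateCol i u).updateCol j v).det = -((M.updateCol i v).updateCol j u).det := by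
  have h_swap : (M.updateCol i u).updateCol j v =
      ((M.updateCol i v).updateCol j u).submatrix id (Equiv.swap i j) := by
    ext k l
    rcases eq_or_ne l i with rfl | hi
    · simp [hij]
    rcases eq_or_ne l j with rfl | hj
    · simp [hij]
    simp [hi, hj, Equiv.swap_apply_of_ne_of_ne hi hj]
  rw [h_swap, Matrix.det_permute', Equiv.Perm.sign_swap hij, Units.val_neg, Units.val_one,
    Int.cast_neg, Int.cast_one, neg_one_mul]

theorem det_updateCol_updateCol_self (M : Matrix ι ι A) {i j : ι} (hij : i ≠ j) (u : ι → A) :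
    ((M.updateCol i u).updateCol j u).det = 0 :=
  Matrix.det_zero_of_column_eq hij fun k => by simp [hij]

theorem sum_det_updateCol_updateCol_mul_eq_zero_of_isSymm (M : Matrix ι ι A) {i j : ι}
    (hij : i ≠ j) {S : Matrix ι ι A} (hS : S.IsSymm) :
    ∑ k, ∑ l, ((M.updateCol i (Pi.single k 1)).updateCol j (Pi.single l 1)).det * S k l = 0 := by
  rw [← Fintype.sum_prod_type']
  refine Finset.sum_ninvolution Prod.swap (fun ⟨k, l⟩ => ?_) (fun ⟨k, l⟩ h_ne h_fixed => h_ne ?_)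
    (fun _ => Finset.mem_univ _) Prod.swap_swap
  · rw [Prod.fst_swap, Prod.snd_swap, hS.apply, det_updateCol_updateCol_swap M hij, neg_mul,
      neg_add_cancel]
  · obtain rfl : l = k := congrArg Prod.fst h_fixed
    rw [det_updateCol_updateCol_self M hij, zero_mul]

end Determinant

section Derivation

variable {R A ι : Type*} [CommSemiring R]

theorem derivation_sum_apply {M : Type*} [CommSemiring A] [Algebra R A] [AddCommMonoid M]
    [Module A M] [Module R M] (s : Finset ι) (D : ι → Derivation R A M) (g : A) :
    (∑ i ∈ s, D i) g = ∑ i ∈ s, D i g := by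
  rw [← Derivation.coeFnAddMonoidHom_apply, map_sum, Finset.sum_apply]
  rfl

variable [DecidableEq ι]

theorem derivation_prod {M : Type*} [CommSemiring A] [Algebra R A] [AddCommMonoid M] [Module A M]
    [Module R M] (D : Derivation R A M) (s : Finset ι) (f : ι → A) :
    D (∏ i ∈ s, f i) = ∑ i ∈ s, (∏ j ∈ s.erase i, f j) • D (f i) := by
  induction s using Finset.induction_on with
  | empty => simp
  | insert a s ha ih =>
    rw [Finset.prod_insert ha, D.leibniz, ih, Finset.sum_insert ha, Finset.erase_insert ha,
      Finset.smul_sum, add_comm]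
    congr 1
    refine Finset.sum_congr rfl fun i hi => ?_
    have hai : a ≠ i := (ne_of_mem_of_not_mem hi ha).symm
    rw [Finset.erase_insert_of_ne hai, Finset.prod_insert (mt Finset.mem_of_mem_erase ha),
      mul_smul]

variable [CommRing A] [Algebra R A] [Fintype ι]

theorem derivation_det (D : Derivation R A A) (M : Matrix ι ι A) :
    D M.det = ∑ j, (M.updateCol j ((M.map D).col j)).det := by
  simp only [Matrix.det_apply, map_sum]
  rw [Finset.sum_comm]
  refine Finset.sum_congr rfl fun τ _ => ?_
  rw [Units.smul_def, map_zsmul, derivation_prod, Finset.smul_sum]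
  refine Finset.sum_congr rfl fun j _ => ?_
  rw [Units.smul_def, ← Finset.prod_erase_mul _ _ (Finset.mem_univ j), Matrix.updateCol_self,
    smul_eq_mul]
  congr 2
  exact Finset.prod_congr rfl fun i hi => (Matrix.updateCol_ne (Finset.ne_of_mem_erase hi)).symm

theorem derivation_det_eq_trace (D : Derivation R A A) (M : Matrix ι ι A) :
    D M.det = (M.adjugate * M.map D).trace := by
  rw [derivation_det, sum_det_updateCol_col]

end Derivation

section Jacobian

variable {R A ι : Type*} [CommRing R] [CommRing A] [Algebra R A]

theorem derivation_apply_comm_of_lie_eq_zero {D₁ D₂ : Derivation R A A} (h : ⁅D₁, D₂⁆ = 0) (g : A) :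
    D₁ (D₂ g) = D₂ (D₁ g) :=
  sub_eq_zero.mp (by rw [← Derivation.commutator_apply, h, Derivation.zero_apply])

/-- The Jacobian matrix of a family `f` with respect to derivations `d`, the `d i` playing the role
of the partial derivatives. The gradient of `f j` is the `j`-th column. -/
def jacobianMatrix (d : ι → Derivation R A A) (f : ι → A) : Matrix ι ι A :=
  Matrix.of fun i j => d i (f j)

theorem jacobianMatrix_update [DecidableEq ι] (d : ι → Derivation R A A) (f : ι → A) (m : ι)
    (g : A) :
    jacobianMatrix d (Function.update f m g) =
      (jacobianMatrix d f).updateCol m fun k => d k g := by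
  ext i j
  rcases eq_or_ne j m with rfl | hj
  · simp [jacobianMatrix]
  · simp [jacobianMatrix, hj]

variable [Fintype ι]

/-- The vector field with components `c` in the frame `d`, as a derivation. -/
def vectorField (d : ι → Derivation R A A) (c : ι → A) : Derivation R A A :=
  ∑ k, c k • d k

theorem vectorField_apply (d : ι → Derivation R A A) (c : ι → A) (g : A) :
    vectorField d c g = ∑ k, c k * d k g :=
  derivation_sum_apply _ _ g

/-- The divergence of the vector field with components `c` in the frame `d`. -/
def divergence (d : ι → Derivation R A A) (c : ι → A) : A :=
  ∑ k, d k (c k)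

theorem jacobianMatrix_vectorField_comp {d : ι → Derivation R A A} (hd : ∀ i j, ⁅d i, d j⁆ = 0)
    (c b : ι → A) :
    jacobianMatrix d (vectorField d c ∘ b) =
      (jacobianMatrix d b).map (vectorField d c) + jacobianMatrix d c * jacobianMatrix d b := by
  ext i j
  calc d i (vectorField d c (b j))
      = ∑ k, (c k * d i (d k (b j)) + d k (b j) * d i (c k)) := by
        simp only [vectorField_apply, map_sum, Derivation.leibniz, smul_eq_mul]
    _ = ∑ k, (c k * d k (d i (b j)) + d i (c k) * d k (b j)) :=
        Finset.sum_congr rfl fun k _ => by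
          rw [derivation_apply_comm_of_lie_eq_zero (hd i k), mul_comm (d k (b j))]
    _ = vectorField d c (d i (b j)) + ∑ k, d i (c k) * d k (b j) := by
        rw [Finset.sum_add_distrib, vectorField_apply]

variable [DecidableEq ι]

/-- The `n`-ary bracket `det (d i (f j))` of a family `d` of derivations, which generalizes
`nambuBracket` from the partial derivatives to arbitrary derivations. -/
def jacobianBracket (d : ι → Derivation R A A) (f : ι → A) : A :=
  (jacobianMatrix d f).det

theorem jacobianBracket_update (d : ι → Derivation R A A) (a : ι → A) (m : ι) (g : A) :
    jacobianBracket d (Function.update a m g) =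
      vectorField d ((jacobianMatrix d a).adjugate m) g := by
  rw [jacobianBracket, jacobianMatrix_update, det_updateCol_eq_sum_adjugate, vectorField_apply]

theorem divergence_adjugate_jacobianMatrix {d : ι → Derivation R A A}
    (hd : ∀ i j, ⁅d i, d j⁆ = 0) (a : ι → A) (m : ι) :
    divergence d ((jacobianMatrix d a).adjugate m) = 0 := by
  let C (k : ι) : Matrix ι ι A := (jacobianMatrix d a).updateCol m (Pi.single k 1)
  have h_leibniz : divergence d ((jacobianMatrix d a).adjugate m) =
      ∑ j, ∑ k, ((C k).updateCol j (((C k).map (d k)).col j)).det := by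
    simp only [divergence, adjugate_apply_eq_det_updateCol, derivation_det, C]
    exact Finset.sum_comm
  rw [h_leibniz]
  refine Finset.sum_eq_zero fun j _ => ?_
  rcases eq_or_ne m j with rfl | hmj
  · refine Finset.sum_eq_zero fun k _ => Matrix.det_eq_zero_of_column_eq_zero m fun l => ?_
    simp [C, Pi.single_apply, apply_ite (d k)]
  · let H : Matrix ι ι A := Matrix.of fun k l => d k (d l (a j))
    have hH : H.IsSymm := Matrix.IsSymm.ext fun k l =>
      derivation_apply_comm_of_lie_eq_zero (hd l k) (a j)
    have h_col (k : ι) : ((C k).map (d k)).col j = H k := by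
      ext l
      simp [C, H, jacobianMatrix, hmj.symm]
    simp_rw [h_col, det_updateCol_eq_sum_adjugate, adjugate_apply_eq_det_updateCol]
    exact sum_det_updateCol_updateCol_mul_eq_zero_of_isSymm (jacobianMatrix d a) hmj hH

theorem sum_jacobianBracket_update_vectorField {d : ι → Derivation R A A}
    (hd : ∀ i j, ⁅d i, d j⁆ = 0) (c b : ι → A) :
    ∑ i, jacobianBracket d (Function.update b i (vectorField d c (b i))) =
      vectorField d c (jacobianBracket d b) + divergence d c * jacobianBracket d b := by
  let B := jacobianMatrix d b
  let D := vectorField d c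
  calc ∑ i, jacobianBracket d (Function.update b i (D (b i)))
      = ∑ i, (B.updateCol i ((jacobianMatrix d (D ∘ b)).col i)).det :=
        Finset.sum_congr rfl fun i _ => congrArg Matrix.det (jacobianMatrix_update d b i (D (b i)))
    _ = (B.adjugate * (B.map D + jacobianMatrix d c * B)).trace := by
        rw [sum_det_updateCol_col, jacobianMatrix_vectorField_comp hd]
    _ = D B.det + (jacobianMatrix d c * (B * B.adjugate)).trace := by
        rw [mul_add, Matrix.trace_add, ← derivation_det_eq_trace, Matrix.trace_mul_comm,
          Matrix.mul_assoc]
    _ = D B.det + divergence d c * B.det := by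
        rw [Matrix.mul_adjugate, Matrix.mul_smul, mul_one, Matrix.trace_smul, smul_eq_mul, mul_comm]
        rfl

theorem nambuBracket_filippov_general {d : ι → Derivation R A A} (hd : ∀ i j, ⁅d i, d j⁆ = 0)
    (m : ι) (a b : ι → A) :
    jacobianBracket d (Function.update a m (jacobianBracket d b)) =
      ∑ i, jacobianBracket d (Function.update b i
        (jacobianBracket d (Function.update a m (b i)))) := by
  simp only [jacobianBracket_update d a m]
  rw [sum_jacobianBracket_update_vectorField hd, divergence_adjugate_jacobianMatrix hd, zero_mul,
    add_zero]

end Jacobian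

theorem lie_pderiv_pderiv {R σ : Type*} [CommRing R] (i j : σ) :
    ⁅pderiv (R := R) i, pderiv (R := R) j⁆ = 0 := by
  classical
  refine derivation_ext fun k => ?_
  simp [Derivation.commutator_apply, pderiv_X, Pi.single_apply, apply_ite]

/-- The Nambu bracket satisfies the Filippov–Jacobi identity:
`{a_1,…,a_{n-1}, {b_1,…,b_n}} = Σ_i {b_1,…, {a_1,…,a_{n-1}, b_i}, …, b_n}`.
Here `{a_1,…,a_{n-1}, x}` is encoded by updating the last slot of `a` to `x`. -/
theorem nambuBracket_filippov (F : Type*) [Field F] [CharZero F]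
    (n : ℕ) (hn : 1 ≤ n)
    (a b : Fin n → MvPolynomial (Fin n) F) :
    nambuBracket F n (Function.update a ⟨n - 1, by omega⟩ (nambuBracket F n b)) =
      ∑ i : Fin n, nambuBracket F n (Function.update b i
        (nambuBracket F n (Function.update a ⟨n - 1, by omega⟩ (b i)))) :=
  nambuBracket_filippov_general lie_pderiv_pderiv _ a b
end

section
/- Let F be a field of characteristic zero, let n ≥ 2, and let R = F[x_1,…,x_{n-1}]. The n-ary Dzhumadildaev bracket {f_1,…,f_n} = det M (with M the n×n matrix whose first row is (f_1,…,f_n) and whose (i+1)-th row is (∂f_1/∂x_i,…,∂f_n/∂x_i)) satisfies the generalized Leibniz rule in its last argument: for all f_1,…,f_{n-1}, g, h in R, {f_1,…,f_{n-1}, g·h} = {f_1,…,f_{n-1}, g}·h + g·{f_1,…,f_{n-1}, h} − {f_1,…,f_{n-1}, 1}·g·h. -/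
open MvPolynomial

/-- The n-ary Dzhumadildaev bracket on F[x_1,…,x_{n-1}]:
`{f_1,…,f_n} = det M`, where the first row of `M` is `(f_1,…,f_n)` and the
`(i+1)`-th row is `(∂f_1/∂x_i,…,∂f_n/∂x_i)`. -/
noncomputable def dzhumaBracket (F : Type*) [Field F] (n : ℕ)
    (f : Fin n → MvPolynomial (Fin (n - 1)) F) : MvPolynomial (Fin (n - 1)) F :=
  (Matrix.of fun i j : Fin n =>
    if h : (i : ℕ) = 0 then f j
    else pderiv (⟨(i : ℕ) - 1, by omega⟩ : Fin (n - 1)) (f j)).det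

/-!
Every row of the matrix of the bracket is obtained by applying one operator, the identity or a
partial derivative, to all the arguments, and each such `D` satisfies
`D (g h) = D(g) h + g D(h) - D(1) g h`. Hence the column of `g h` is a combination of the columns of
`g`, `h` and `1` with coefficients independent of the row, and the determinant, being linear in each
column, inherits the rule.
-/

/-- A generalized derivation of a commutative ring `A`: a map `D : A → A` with
`D (a b) = D(a) b + a D(b) - D(1) a b`. When `D` is additive, this says that
`a ↦ D(a) - D(1) a` is a derivation, so that `D` is a differential operator of order at most one;
additivity is not made part of the notion. -/
def IsGenDerivation {A : Type*} [CommRing A] (D : A → A) : Prop :=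
  ∀ a b, D (a * b) = D a * b + a * D b - D 1 * a * b

namespace IsGenDerivation

variable {A : Type*} [CommRing A]

protected theorem id : IsGenDerivation (id : A → A) := by
  intro a b
  simp only [id_eq]
  ring

theorem of_derivation {R : Type*} [CommSemiring R] [Algebra R A] (D : Derivation R A A) :
    IsGenDerivation D := by
  intro a b
  rw [D.leibniz, D.map_one_eq_zero, smul_eq_mul, smul_eq_mul]
  ring

variable {ι : Type*} {D : ι → A → A}

theorem pi_mul (hD : ∀ i, IsGenDerivation (D i)) (a b : A) :
    (fun i => D i (a * b)) =
      b • (fun i => D i a) + a • (fun i => D i b) + (-(a * b)) • fun i => D i 1 := by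
  funext i
  simp only [Pi.add_apply, Pi.smul_apply, smul_eq_mul, hD i a b]
  ring

theorem det_updateCol [Fintype ι] [DecidableEq ι] (hD : ∀ i, IsGenDerivation (D i))
    (M : Matrix ι ι A) (k : ι) :
    IsGenDerivation fun a => (M.updateCol k fun i => D i a).det := by
  intro a b
  simp only [pi_mul hD, Matrix.det_updateCol_add, Matrix.det_updateCol_smul]
  ring

end IsGenDerivation

theorem matrix_of_update_eq_updateCol {m n α β : Type*} [DecidableEq n] (D : m → α → β)
    (f : n → α) (k : n) (a : α) :
    (Matrix.of fun i j => D i (Function.update f k a j)) =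
      (Matrix.of fun i j => D i (f j)).updateCol k fun i => D i a := by
  ext i j
  simp only [Matrix.of_apply, Matrix.updateCol_apply, Function.update_apply, apply_ite (D i)]

section

variable {F : Type*} [Field F] {n : ℕ}

/-- The operator applied to the arguments of the bracket in row `i` of its matrix: the identity in
row `0` and `∂/∂x_i` in row `i ≥ 1`. With variables indexed from `0`, the latter is
`pderiv (i - 1)`. -/
noncomputable def dzhumaRow (i : Fin n) (p : MvPolynomial (Fin (n - 1)) F) :
    MvPolynomial (Fin (n - 1)) F :=
  if h : (i : ℕ) = 0 then p else pderiv (⟨(i : ℕ) - 1, by omega⟩ : Fin (n - 1)) p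

theorem isGenDerivation_dzhumaRow (i : Fin n) :
    IsGenDerivation (dzhumaRow i : MvPolynomial (Fin (n - 1)) F → _) := by
  unfold dzhumaRow
  split
  · exact IsGenDerivation.id
  · exact IsGenDerivation.of_derivation (R := F) (pderiv _)

theorem dzhumaBracket_update (f : Fin n → MvPolynomial (Fin (n - 1)) F) (k : Fin n)
    (p : MvPolynomial (Fin (n - 1)) F) :
    dzhumaBracket F n (Function.update f k p) =
      ((Matrix.of fun i j => dzhumaRow i (f j)).updateCol k fun i => dzhumaRow i p).det :=
  congrArg Matrix.det (matrix_of_update_eq_updateCol dzhumaRow f k p)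

theorem dzhumaBracket_genLeibniz_general (f : Fin n → MvPolynomial (Fin (n - 1)) F) (k : Fin n) :
    IsGenDerivation fun p => dzhumaBracket F n (Function.update f k p) := by
  simp only [dzhumaBracket_update]
  exact IsGenDerivation.det_updateCol isGenDerivation_dzhumaRow _ k

end

/-- The Dzhumadildaev bracket satisfies the generalized Leibniz rule in its
last argument:
`{f_1,…,f_{n-1}, g·h} = {f_1,…,f_{n-1}, g}·h + g·{f_1,…,f_{n-1}, h}
  − {f_1,…,f_{n-1}, 1}·g·h`. -/
theorem dzhumaBracket_genLeibniz (F : Type*) [Field F] [CharZero F]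
    (n : ℕ) (hn : 2 ≤ n)
    (f : Fin n → MvPolynomial (Fin (n - 1)) F) (g h : MvPolynomial (Fin (n - 1)) F) :
    dzhumaBracket F n (Function.update f ⟨n - 1, by omega⟩ (g * h)) =
      dzhumaBracket F n (Function.update f ⟨n - 1, by omega⟩ g) * h +
        g * dzhumaBracket F n (Function.update f ⟨n - 1, by omega⟩ h) -
        dzhumaBracket F n (Function.update f ⟨n - 1, by omega⟩ 1) * g * h := by
  exact dzhumaBracket_genLeibniz_general f _ g h
end

section
/- Let A be a commutative unital ring, let n ≥ 1, and let b : A^n → A be an n-ary operation satisfying the generalized Leibniz rule in its last argument: b(f_1,…,f_{n-1}, g·h) = b(f_1,…,f_{n-1}, g)·h + g·b(f_1,…,f_{n-1}, h) − b(f_1,…,f_{n-1}, 1)·g·h for all f_1,…,f_{n-1}, g, h in A. Let φ be an invertible element of A and define the gauge-twisted bracket b^φ(f_1,…,f_n) = φ^{-1}·b(φ·f_1,…,φ·f_n). Then b^φ also satisfies the generalized Leibniz rule in its last argument: b^φ(f_1,…,f_{n-1}, g·h) = b^φ(f_1,…,f_{n-1}, g)·h + g·b^φ(f_1,…,f_{n-1},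 h) − b^φ(f_1,…,f_{n-1}, 1)·g·h. -/
/-- The gauge-twisted bracket `b^φ(f_1,…,f_n) = φ⁻¹·b(φ·f_1,…,φ·f_n)`. -/
def gaugeTwist {A : Type*} [CommRing A] {n : ℕ} (b : (Fin n → A) → A) (φ : Aˣ) :
    (Fin n → A) → A :=
  fun f => (↑φ⁻¹ : A) * b fun i => (φ : A) * f i

/-- The generalized Leibniz rule for a unary operation `D`. For additive `D` it says that
`g ↦ D g - D 1 * g` is a derivation; additivity is not part of the notion. It is applied to the
operations obtained from an `n`-ary bracket by fixing all arguments but one. -/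
def IsGenLeibniz {A : Type*} [CommRing A] (D : A → A) : Prop :=
  ∀ g h, D (g * h) = D g * h + g * D h - D 1 * g * h

namespace IsGenLeibniz

variable {A : Type*} [CommRing A] {D : A → A}

theorem const_mul (hD : IsGenLeibniz D) (c : A) : IsGenLeibniz fun x => c * D x := by
  intro g h
  linear_combination c * hD g h

theorem comp_const_mul (hD : IsGenLeibniz D) (a : A) : IsGenLeibniz fun x => D (a * x) := by
  intro g h
  -- The correction terms in `D 1` of the two expansions cancel, leaving the one in `D a`.
  have expand_agh : D (a * g * h) = D (a * g) * h + a * g * D h - D 1 * (a * g) * h := hD (a * g) h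
  have expand_ah : D (a * h) = D a * h + a * D h - D 1 * a * h := hD a h
  simp only [mul_one, ← mul_assoc]
  linear_combination expand_agh - g * expand_ah

end IsGenLeibniz

section GaugeTwist

variable {A : Type*} [CommRing A] {n : ℕ} (b : (Fin n → A) → A) (φ : Aˣ)

theorem gaugeTwist_update (f : Fin n → A) (i : Fin n) (x : A) :
    gaugeTwist b φ (Function.update f i x) =
      (↑φ⁻¹ : A) * b (Function.update (fun j => (φ : A) * f j) i ((φ : A) * x)) :=
  congrArg (fun u => (↑φ⁻¹ : A) * b u) <|
    funext <| Function.apply_update (fun _ y => (φ : A) * y) f i x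

theorem gaugeTwist_genLeibniz_general (i : Fin n)
    (hb : ∀ f : Fin n → A, IsGenLeibniz fun x => b (Function.update f i x)) (f : Fin n → A) :
    IsGenLeibniz fun x => gaugeTwist b φ (Function.update f i x) := by
  simp only [gaugeTwist_update]
  exact ((hb fun j => (φ : A) * f j).comp_const_mul (φ : A)).const_mul (↑φ⁻¹ : A)

end GaugeTwist

/-- If an n-ary operation `b` on a commutative unital ring satisfies the
generalized Leibniz rule in its last argument, then so does the gauge-twisted
bracket `b^φ` for any invertible `φ`. -/
theorem gaugeTwist_genLeibniz (A : Type*) [CommRing A] (n : ℕ) (hn : 1 ≤ n)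
    (b : (Fin n → A) → A) (φ : Aˣ)
    (hb : ∀ (f : Fin n → A) (g h : A),
      b (Function.update f ⟨n - 1, by omega⟩ (g * h)) =
        b (Function.update f ⟨n - 1, by omega⟩ g) * h +
          g * b (Function.update f ⟨n - 1, by omega⟩ h) -
          b (Function.update f ⟨n - 1, by omega⟩ 1) * g * h) :
    ∀ (f : Fin n → A) (g h : A),
      gaugeTwist b φ (Function.update f ⟨n - 1, by omega⟩ (g * h)) =
        gaugeTwist b φ (Function.update f ⟨n - 1, by omega⟩ g) * h +
          g * gaugeTwist b φ (Function.update f ⟨n - 1, by omega⟩ h) -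
          gaugeTwist b φ (Function.update f ⟨n - 1, by omega⟩ 1) * g * h :=
  gaugeTwist_genLeibniz_general b φ _ hb
end
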